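/- Let r be even. For all π₁, π₂ ∈ G(r,n) and every absolute involution w ∈ I_{r,n}, sign_e(π₂π₁, w) = sign_e(π₁, w) · sign_e(π₂, π₁ w π₁ᵗ). -/

import Mathlib

open Finset CategoryTheory

/-- The wreath product `ℤ_r ≀ S_n`: elements are pairs `(σ, z)` with
`σ` a permutation of `{1,…,n}` and `z ∈ (ℤ/rℤ)^n`.  The multiplication is
`(σ,c)·(τ,d) = (στ, (c_{τ⁻¹(i)} + d_i)_i)`, where in the paper's convention
permutations compose left-to-right; translated to Lean's convention
(`(σ * τ) x = σ (τ x)`) this reads `(σ,c)·(τ,d) = (σ * τ, fun i => c (τ i) + d i)`,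
i.e. the semidirect product of `Fin n → ZMod r` by `Equiv.Perm (Fin n)`
acting by permuting coordinates. -/
def Wreath (r n : ℕ) : Type := Equiv.Perm (Fin n) × (Fin n → ZMod r)

namespace Wreath

variable {r n : ℕ}

instance : Group (Wreath r n) where
  mul v w := ⟨v.1 * w.1, fun i => v.2 (w.1 i) + w.2 i⟩
  one := ⟨1, 0⟩
  inv v := ⟨v.1⁻¹, fun i => -v.2 (v.1⁻¹ i)⟩
  mul_assoc a b c := Prod.ext (mul_assoc _ _ _) (funext fun i => add_assoc _ _ _)
  one_mul a := by
    refine Prod.ext (one_mul _) (funext fun i => ?_)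
    show (0 : Fin n → ZMod r) (a.1 i) + a.2 i = a.2 i
    simp
  mul_one a := by
    refine Prod.ext (mul_one _) (funext fun i => ?_)
    show a.2 ((1 : Equiv.Perm (Fin n)) i) + (0 : Fin n → ZMod r) i = a.2 i
    simp
  inv_mul_cancel a := by
    refine Prod.ext (inv_mul_cancel _) (funext fun i => ?_)
    show -a.2 (a.1⁻¹ (a.1 i)) + a.2 i = (0 : Fin n → ZMod r) i
    simp

instance [NeZero r] : Fintype (Wreath r n) :=
  inferInstanceAs (Fintype (Equiv.Perm (Fin n) × (Fin n → ZMod r)))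

instance : DecidableEq (Wreath r n) :=
  inferInstanceAs (DecidableEq (Equiv.Perm (Fin n) × (Fin n → ZMod r)))

theorem mul_def (v w : Wreath r n) :
    v * w = ⟨v.1 * w.1, fun i => v.2 (w.1 i) + w.2 i⟩ := rfl

theorem one_def : (1 : Wreath r n) = ⟨1, 0⟩ := rfl

theorem inv_def (v : Wreath r n) : v⁻¹ = ⟨v.1⁻¹, fun i => -v.2 (v.1⁻¹ i)⟩ := rfl

/-- The bar operation `(σ, z) ↦ (σ, −z)`. -/
def bar (v : Wreath r n) : Wreath r n := ⟨v.1, -v.2⟩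

theorem bar_mul (v w : Wreath r n) : bar (v * w) = bar v * bar w := by
  refine Prod.ext rfl (funext fun i => ?_)
  show -(v.2 (w.1 i) + w.2 i) = -v.2 (w.1 i) + -w.2 i
  ring

theorem bar_bar (v : Wreath r n) : bar (bar v) = v := by
  refine Prod.ext rfl ?_
  show - - v.2 = v.2
  simp

/-- `bar` as a group automorphism. -/
def barAut : Wreath r n ≃* Wreath r n where
  toFun := bar
  invFun := bar
  left_inv := bar_bar
  right_inv := bar_bar
  map_mul' := bar_mul

theorem bar_inv (v : Wreath r n) : bar v⁻¹ = (bar v)⁻¹ :=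
  map_inv (barAut : Wreath r n ≃* Wreath r n) v

/-- `vᵗ := (v̄)⁻¹`. -/
def tr (v : Wreath r n) : Wreath r n := (bar v)⁻¹

/-- Conjugation `w ↦ π w πᵗ` maps absolute involutions to absolute involutions. -/
theorem conj_absInv {w : Wreath r n} (hw : w * bar w = 1) (π : Wreath r n) :
    (π * w * tr π) * bar (π * w * tr π) = 1 := by
  have h1 : bar (π * w * tr π) = bar π * bar w * π⁻¹ := by
    rw [bar_mul, bar_mul, tr, bar_inv, bar_bar]
  calc (π * w * tr π) * bar (π * w * tr π)
      = π * (w * bar w) * π⁻¹ := by rw [h1, tr]; group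
    _ = 1 := by rw [hw]; group

end Wreath

/-- The set of inversions of `σ`, encoded as ordered pairs `(i,j)` with `i < j`
and `σ j < σ i` (one representative for each unordered pair `{i,j}` with
`(j−i)(σ(j)−σ(i)) < 0`). -/
def invPairs {n : ℕ} (σ : Equiv.Perm (Fin n)) : Finset (Fin n × Fin n) :=
  Finset.univ.filter fun p => p.1 < p.2 ∧ σ p.2 < σ p.1

/-- The 2-cycles of an involution `u`, encoded as ordered pairs `(i,j)` with `i < j`,
`u i = j` and `u j = i` (one representative for each unordered pair `{i,j}`). -/
def pairSet {n : ℕ} (u : Equiv.Perm (Fin n)) : Finset (Fin n × Fin n) :=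
  Finset.univ.filter fun p => p.1 < p.2 ∧ u p.1 = p.2 ∧ u p.2 = p.1

/-- `sign_o(π,w) := (−1)^{#(Inv(|π|) ∩ Pair(|w|))}`. -/
def signO {r n : ℕ} (π w : Wreath r n) : ℤ :=
  (-1) ^ ((invPairs π.1 ∩ pairSet w.1).card)

/-- A family of finite-dimensional complex representations forming a complete set of
pairwise non-isomorphic irreducible representations of `G`. -/
def IsCompleteIrrFamily {G : Type} [Monoid G] {ι : Type} (V : ι → FDRep ℂ G) : Prop :=
  (∀ i, Simple (V i)) ∧ (∀ i j, Nonempty (V i ≅ V j) → i = j) ∧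
    ∀ W : FDRep ℂ G, Simple W → ∃ i, Nonempty (V i ≅ W)

/-- `B(π,w)` (for even `r`): the set of indices `i` with `|w|(i) = i`,
`z_w(i) = 2k+1` odd with `k ∈ {0,…,r/2−1}`, and `k + z_π(i) ∈ {r/2,…,r−1}`
(computed in `ℤ/rℤ`, identified with `{0,…,r−1}` via `ZMod.val`). -/
noncomputable def Bset {r n : ℕ} (π w : Wreath r n) : Finset (Fin n) := by
  classical exact Finset.univ.filter fun i => w.1 i = i ∧ ∃ k ∈ Finset.range (r / 2),
    (w.2 i).val = 2 * k + 1 ∧ r / 2 ≤ (((k : ℕ) : ZMod r) + π.2 i).val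

/-- `sign_e(π,w) := (−1)^{#B(π,w)} · (−1)^{#(Inv(|π|) ∩ Pair(|w|))}`. -/
noncomputable def signE {r n : ℕ} (π w : Wreath r n) : ℤ :=
  (-1) ^ (Bset π w).card * (-1) ^ ((invPairs π.1 ∩ pairSet w.1).card)

theorem neg_one_pow_card_filter {α : Type} [Fintype α] (p : α → Prop) [DecidablePred p] :
    (-1 : ℤ) ^ (Finset.univ.filter p).card = ∏ i, if p i then (-1 : ℤ) else 1 := by
  rw [Finset.prod_ite]; simp

theorem half_key (r : ℕ) [NeZero r] (hr : Even r) (a z y : ZMod r) :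
    (if ∃ k ∈ Finset.range (r / 2), a.val = 2 * k + 1 ∧
        r / 2 ≤ (((k : ℕ) : ZMod r) + (y + z)).val then (-1 : ℤ) else 1) =
    (if ∃ k ∈ Finset.range (r / 2), a.val = 2 * k + 1 ∧
        r / 2 ≤ (((k : ℕ) : ZMod r) + z).val then (-1 : ℤ) else 1) *
    (if ∃ k ∈ Finset.range (r / 2), (z + a + z).val = 2 * k + 1 ∧
        r / 2 ≤ (((k : ℕ) : ZMod r) + y).val then (-1 : ℤ) else 1) := by
  obtain ⟨m, hm⟩ := hr
  have hr0 : 0 < r := Nat.pos_of_ne_zero (NeZero.ne r)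
  have hm2 : r / 2 = m := by omega
  have ha := ZMod.val_lt a
  have hz := ZMod.val_lt z
  have hy := ZMod.val_lt y
  have small : ∀ x : ℕ, x < 2 * r → x % r = if x < r then x else x - r := by
    intro x hx
    split_ifs with h
    · exact Nat.mod_eq_of_lt h
    · rw [Nat.mod_eq_sub_mod (by omega), Nat.mod_eq_of_lt (by omega)]
  have vadd : ∀ x y : ZMod r, (x + y).val =
      if x.val + y.val < r then x.val + y.val else x.val + y.val - r := by
    intro x y
    rw [ZMod.val_add, small]
    have := ZMod.val_lt x
    have := ZMod.val_lt y
    omega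
  have hcast : ∀ k, k < m → ((k : ℕ) : ZMod r).val = k := by
    intro k hk
    exact ZMod.val_natCast_of_lt (by omega)
  have ex : ∀ (c t : ZMod r), (∃ k ∈ Finset.range (r / 2), c.val = 2 * k + 1 ∧
        r / 2 ≤ (((k : ℕ) : ZMod r) + t).val) ↔ (c.val % 2 = 1 ∧
          m ≤ if c.val / 2 + t.val < r then c.val / 2 + t.val else c.val / 2 + t.val - r) := by
    intro c t
    have hc := ZMod.val_lt c
    rw [hm2]
    constructor
    · rintro ⟨k, hk, h1, h2⟩
      rw [Finset.mem_range] at hk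
      rw [vadd, hcast k hk] at h2
      have : c.val / 2 = k := by omega
      rw [this]
      exact ⟨by omega, h2⟩
    · rintro ⟨h1, h2⟩
      refine ⟨c.val / 2, Finset.mem_range.2 (by omega), by omega, ?_⟩
      rw [vadd, hcast _ (by omega)]
      exact h2
  have vadd' : ∀ x y : ZMod r, ((x + y).val = x.val + y.val ∧ x.val + y.val < r) ∨
      ((x + y).val + r = x.val + y.val) := by
    intro x y
    have := vadd x y
    split_ifs at this <;> omega
  have h1 := vadd' y z
  have h2 := vadd' z a
  have h3 := vadd' (z + a) z
  have b1 := ZMod.val_lt (y + z)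
  have b2 := ZMod.val_lt (z + a)
  have b3 := ZMod.val_lt (z + a + z)
  simp only [ex]
  clear ex hcast vadd vadd' small hm2
  generalize (z + a + z).val = s3 at *
  generalize (z + a).val = s2 at *
  generalize (y + z).val = s1 at *
  generalize a.val = a' at *
  generalize z.val = z' at *
  generalize y.val = y' at *
  have go : ∀ u v : ℕ, (m ≤ if u + v < r then u + v else u + v - r) ↔
      ((u + v < r ∧ m ≤ u + v) ∨ r + m ≤ u + v) := by
    intro u v
    split_ifs <;> omega
  simp only [go]
  clear go
  by_cases ho : a' % 2 = 1
  · have ho3 : s3 % 2 = 1 := by omega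
    simp only [ho, ho3, true_and]
    obtain ⟨k, rfl⟩ : ∃ k, a' = 2 * k + 1 := ⟨a' / 2, by omega⟩
    obtain ⟨l, rfl⟩ : ∃ l, s3 = 2 * l + 1 := ⟨s3 / 2, by omega⟩
    have e1 : (2 * k + 1) / 2 = k := by omega
    have e2 : (2 * l + 1) / 2 = l := by omega
    rw [e1, e2]
    rcases h1 with h1 | h1 <;> rcases h2 with h2 | h2 <;> rcases h3 with h3 | h3 <;>
      split_ifs <;> first | rfl | (exfalso; omega)
  · have ho3 : ¬ s3 % 2 = 1 := by omega
    simp [ho, ho3]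

theorem conj_fst {r n : ℕ} (π w : Wreath r n) :
    (π * w * Wreath.tr π).1 = π.1 * w.1 * π.1⁻¹ := rfl

theorem conj_snd {r n : ℕ} (π w : Wreath r n) (i : Fin n) :
    (π * w * Wreath.tr π).2 (π.1 i) = π.2 (w.1 i) + w.2 i + π.2 i := by
  have : (π * w * Wreath.tr π).2 (π.1 i) =
    π.2 (w.1 (π.1⁻¹ (π.1 i))) + w.2 (π.1⁻¹ (π.1 i)) + - - π.2 (π.1⁻¹ (π.1 i)) := rfl
  rw [this]; simp

theorem Bset_mul (r n : ℕ) [NeZero r] (hr : Even r) (π₁ π₂ w : Wreath r n) :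
    (-1 : ℤ) ^ (Bset (π₂ * π₁) w).card = (-1) ^ (Bset π₁ w).card *
      (-1) ^ (Bset π₂ (π₁ * w * Wreath.tr π₁)).card := by
  classical
  unfold Bset
  rw [neg_one_pow_card_filter, neg_one_pow_card_filter, neg_one_pow_card_filter]
  refine Eq.trans ?_ (congrArg _ (Equiv.prod_comp π₁.1 _))
  rw [← Finset.prod_mul_distrib]
  refine Finset.prod_congr rfl fun i _ => ?_
  rw [conj_fst, conj_snd]
  have h2 : (π₂ * π₁).2 i = π₂.2 (π₁.1 i) + π₁.2 i := rfl
  rw [h2]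
  by_cases h : w.1 i = i
  · have := half_key r hr (w.2 i) (π₁.2 i) (π₂.2 (π₁.1 i))
    simpa [h] using this
  · simp [h]

def sortMap {n : ℕ} (σ : Equiv.Perm (Fin n)) (p : Fin n × Fin n) : Fin n × Fin n :=
  if σ p.1 < σ p.2 then (σ p.1, σ p.2) else (σ p.2, σ p.1)

theorem sortMap_mem {n : ℕ} (σ u : Equiv.Perm (Fin n)) (p : Fin n × Fin n)
    (hp : p ∈ pairSet u) : sortMap σ p ∈ pairSet (σ * u * σ⁻¹) := by
  simp only [pairSet, Finset.mem_filter, Finset.mem_univ, true_and] at hp ⊢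
  obtain ⟨h1, h2, h3⟩ := hp
  have hne : σ p.1 ≠ σ p.2 := fun h => h1.ne (σ.injective h)
  unfold sortMap
  split_ifs with h
  · simp [h, h2, h3]
  · simp [h2, h3]; exact lt_of_le_of_ne (not_lt.1 h) hne.symm

theorem sortMap_inv {n : ℕ} (σ τ : Equiv.Perm (Fin n)) (hτ : ∀ i, τ (σ i) = i)
    (p : Fin n × Fin n) (hp : p.1 < p.2) : sortMap τ (sortMap σ p) = p := by
  unfold sortMap
  by_cases h : σ p.1 < σ p.2 <;> simp [h, hτ, hp, hp.le]

theorem neg_one_pow_inv {n : ℕ} (σ u : Equiv.Perm (Fin n)) :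
    (-1 : ℤ) ^ (invPairs σ ∩ pairSet u).card =
      ∏ p ∈ pairSet u, if σ p.2 < σ p.1 then (-1 : ℤ) else 1 := by
  have : invPairs σ ∩ pairSet u = (pairSet u).filter fun p => σ p.2 < σ p.1 := by
    ext p
    simp only [invPairs, pairSet, Finset.mem_inter, Finset.mem_filter, Finset.mem_univ, true_and]
    tauto
  rw [this, Finset.prod_ite]; simp

theorem inv_mul_sign {n : ℕ} (σ τ u : Equiv.Perm (Fin n)) :
    (-1 : ℤ) ^ (invPairs (τ * σ) ∩ pairSet u).card = (-1) ^ (invPairs σ ∩ pairSet u).card *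
      (-1) ^ (invPairs τ ∩ pairSet (σ * u * σ⁻¹)).card := by
  rw [neg_one_pow_inv, neg_one_pow_inv, neg_one_pow_inv]
  have key : ∏ p ∈ pairSet u, (if τ (sortMap σ p).2 < τ (sortMap σ p).1 then (-1 : ℤ) else 1) =
      ∏ p ∈ pairSet (σ * u * σ⁻¹), if τ p.2 < τ p.1 then (-1 : ℤ) else 1 := by
    refine Finset.prod_nbij' (sortMap σ) (sortMap σ⁻¹) ?_ ?_ ?_ ?_ ?_
    · exact fun p hp => sortMap_mem σ u p hp
    · intro p hp
      have := sortMap_mem σ⁻¹ _ p hp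
      simpa [mul_assoc] using this
    · intro p hp
      exact sortMap_inv σ σ⁻¹ (by simp) p (Finset.mem_filter.1 hp).2.1
    · intro p hp
      exact sortMap_inv σ⁻¹ σ (by simp) p (Finset.mem_filter.1 hp).2.1
    · exact fun p hp => rfl
  rw [← key, ← Finset.prod_mul_distrib]
  refine Finset.prod_congr rfl fun p hp => ?_
  have h1 := (Finset.mem_filter.1 hp).2.1
  have hne : σ p.1 ≠ σ p.2 := fun h => h1.ne (σ.injective h)
  have hne2 : τ (σ p.1) ≠ τ (σ p.2) := fun h => hne (τ.injective h)
  unfold sortMap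
  simp only [Equiv.Perm.mul_apply]
  rcases lt_or_gt_of_ne hne with h | h <;> rcases lt_or_gt_of_ne hne2 with h' | h' <;>
    simp [h, h', h.not_gt, h'.not_gt]

/-- **Multiplicativity of `sign_e`** (Part 1 of the proof of Theorem `t.model` for even
`r`): for all `π₁, π₂ ∈ G(r,n)` and every absolute involution `w`,
`sign_e(π₂π₁, w) = sign_e(π₁, w) · sign_e(π₂, π₁ w π₁ᵗ)`. -/
theorem signE_mul
    (r n : ℕ) [NeZero r] (hn : 0 < n) (hr : Even r) (π₁ π₂ w : Wreath r n)
    (hw : w * Wreath.bar w = 1) :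
    signE (π₂ * π₁) w = signE π₁ w * signE π₂ (π₁ * w * Wreath.tr π₁) := by
  unfold signE
  rw [Bset_mul r n hr π₁ π₂ w, conj_fst]
  have : (π₂ * π₁).1 = π₂.1 * π₁.1 := rfl
  rw [this, inv_mul_sign π₁.1 π₂.1 w.1]
  ring
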